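/- arXiv:1906.04098 — 3 statements merged into one kernel-verified Lean document; each statement's English description precedes it below -/
import Mathlib

section
/- Let β > 0, ω > 0 and u ∈ [0, β]. Then the family (indexed by η ∈ ℤ) of complex numbers e^{i (2π/β) η u} / ( ω² + ((2π/β) η)² ) is (unconditionally) summable, with sum equal to (β/(2ω)) · ( e^{-uω} + e^{-(β-u)ω} ) / ( 1 - e^{-βω} ). -/
/-!
The right-hand side, as a function of `u ∈ [0, β]`, takes equal values at `0` and `β`, so it
extends to a continuous `β`-periodic function. It is a combination of `e^{-ωu}` and `e^{ωu}`, and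
integrating these exponentials identifies its `η`-th Fourier coefficient as
`1 / (ω² + (2πη/β)²)`. The coefficients are summable, hence the Fourier series converges to the
function everywhere.
-/

open Complex in
theorem summable_one_div_sq_add_mul_int_sq (w : ℂ) {c : ℂ} (hc : c ≠ 0) :
    Summable fun n : ℤ => 1 / (w ^ 2 + (c * n) ^ 2) := by
  have factor (n : ℤ) : w ^ 2 + (c * n) ^ 2 = -c ^ 2 * ((I * w / c - n) * (I * w / c + n)) := by
    field_simp
    linear_combination w ^ 2 * I_sq
  have hprod := EisensteinSeries.summable_linear_sub_mul_linear_add (I * w / c) 1 1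
  simp only [Int.cast_one, one_mul] at hprod
  simpa only [factor, one_div, mul_inv] using hprod.mul_left (-c ^ 2)⁻¹

section FourierCoeffOn

open Complex MeasureTheory Set

variable {a b : ℝ}

theorem fourierCoeffOn_add {E : Type*} [NormedAddCommGroup E] [NormedSpace ℂ E] (hab : a < b)
    {f g : ℝ → E} (hf : IntervalIntegrable f volume a b) (hg : IntervalIntegrable g volume a b)
    (n : ℤ) :
    fourierCoeffOn hab (fun x => f x + g x) n =
      fourierCoeffOn hab f n + fourierCoeffOn hab g n := by
  have hfourier : ContinuousOn (fun x : ℝ => fourier (-n) (x : AddCircle (b - a))) (uIcc a b) :=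
    ((fourier (-n)).continuous.comp (AddCircle.continuous_mk' _)).continuousOn
  simp only [fourierCoeffOn_eq_integral, smul_add]
  rw [intervalIntegral.integral_add (hf.continuousOn_smul hfourier) (hg.continuousOn_smul hfourier),
    smul_add]

theorem fourierCoeffOn_exp_mul (hab : a < b) {w : ℂ} {n : ℤ}
    (hw : w * (b - a) ≠ n * (2 * Real.pi * I)) :
    fourierCoeffOn hab (fun x : ℝ => exp (w * x)) n =
      fourier (-n) (a : AddCircle (b - a)) * (exp (w * b) - exp (w * a)) /
        (w * (b - a) - n * (2 * Real.pi * I)) := by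
  have hba : (b - a : ℂ) ≠ 0 := by exact_mod_cast sub_ne_zero.mpr hab.ne'
  set c : ℂ := w - n * (2 * Real.pi * I) / (b - a) with hc_def
  have hc_mul : c * (b - a) = w * (b - a) - n * (2 * Real.pi * I) := by
    rw [hc_def]; field_simp
  have hc : c ≠ 0 := left_ne_zero_of_mul (hc_mul ▸ sub_ne_zero.mpr hw)
  have fourier_mul_exp (x : ℝ) :
      fourier (-n) (x : AddCircle (b - a)) * exp (w * x) = exp (c * x) := by
    rw [fourier_coe_apply, ← exp_add, hc_def]
    push_cast
    ring_nf
  have fourier_endpoints :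
      fourier (-n) (b : AddCircle (b - a)) = fourier (-n) (a : AddCircle (b - a)) := by
    rw [← AddCircle.coe_add_period (b - a) a, add_sub_cancel]
  simp only [fourierCoeffOn_eq_integral, smul_eq_mul, fourier_mul_exp]
  rw [integral_exp_mul_complex hc, ← fourier_mul_exp, ← fourier_mul_exp, fourier_endpoints,
    ← mul_sub, ← hc_mul, real_smul]
  push_cast
  field_simp

theorem fourierCoeffOn_zero_left_exp_mul (hb : 0 < b) {w : ℂ} {n : ℤ}
    (hw : w * b ≠ n * (2 * Real.pi * I)) :
    fourierCoeffOn hb (fun x : ℝ => exp (w * x)) n =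
      (exp (w * b) - 1) / (w * b - n * (2 * Real.pi * I)) := by
  simpa using fourierCoeffOn_exp_mul hb (by simpa using hw)

theorem hasSum_fourierCoeffOn_smul_fourier (hab : a < b) {f : ℝ → ℂ}
    (hf : ContinuousOn f (Icc a b)) (hfab : f a = f b) (hsum : Summable (fourierCoeffOn hab f))
    {x : ℝ} (hx : x ∈ Icc a b) :
    HasSum (fun n => fourierCoeffOn hab f n • fourier n (x : AddCircle (b - a))) (f x) := by
  have : Fact (0 < b - a) := ⟨sub_pos.mpr hab⟩
  let F : C(AddCircle (b - a), ℂ) :=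
    ⟨AddCircle.liftIoc (b - a) a f,
      AddCircle.liftIoc_continuous (by rwa [add_sub_cancel]) (by rwa [add_sub_cancel])⟩
  have hF_Ioc {y : ℝ} (hy : y ∈ Ioc a b) : F y = f y :=
    AddCircle.liftIoc_coe_apply (by rwa [add_sub_cancel])
  have hFx : F x = f x := by
    rcases hx.1.eq_or_lt with rfl | hax
    · rw [hfab, ← hF_Ioc (right_mem_Ioc.mpr hab), ← AddCircle.coe_add_period (b - a) a,
        add_sub_cancel]
    · exact hF_Ioc ⟨hax, hx.2⟩
  exact hFx ▸ has_pointwise_sum_fourier_series_of_summable (f := F) hsum x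

end FourierCoeffOn

section ThermalPropagator

open Complex Set

/-- The thermal two-point function of a mode of energy `ω` at inverse temperature `β`, continued to
imaginary time `u` and normalised so that its Fourier coefficients on `[0, β]` are
`1 / (ω² + (2πη/β)²)`. The energy may be complex; where `exp (-β * ω) = 1` the definition divides
by zero and returns the junk value `0`. -/
noncomputable def thermalPropagator (β : ℝ) (ω : ℂ) (u : ℝ) : ℂ :=
  β / (2 * ω) * (exp (-u * ω) + exp (-(β - u) * ω)) / (1 - exp (-β * ω))

variable {β : ℝ} {ω : ℂ}

theorem continuous_thermalPropagator : Continuous (thermalPropagator β ω) := by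
  unfold thermalPropagator
  fun_prop

theorem thermalPropagator_zero_eq_thermalPropagator_period :
    thermalPropagator β ω 0 = thermalPropagator β ω β := by
  simp [thermalPropagator, add_comm]

theorem thermalPropagator_eq_exp_add_exp (u : ℝ) :
    thermalPropagator β ω u = β / (2 * ω) / (1 - exp (-β * ω)) *
      (exp (-ω * u) + exp (-β * ω) * exp (ω * u)) := by
  have shift : exp (-(β - u) * ω) = exp (-β * ω) * exp (ω * u) := by
    rw [← exp_add]
    ring_nf
  rw [thermalPropagator, shift, neg_mul_comm, mul_comm (u : ℂ) (-ω)]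
  ring

theorem fourierCoeffOn_exp_neg_add_exp (hβ : 0 < β) (hω : exp (-β * ω) ≠ 1) (n : ℤ) :
    fourierCoeffOn hβ (fun u : ℝ => exp (-ω * u) + exp (-β * ω) * exp (ω * u)) n =
      (1 - exp (-β * ω)) * (2 * ω * β) / ((ω * β) ^ 2 - (n * (2 * Real.pi * I)) ^ 2) := by
  have hneg : -ω * β ≠ n * (2 * Real.pi * I) := fun h =>
    hω (exp_eq_one_iff.mpr ⟨n, by rw [← h]; ring⟩)
  have hpos : ω * β ≠ n * (2 * Real.pi * I) := fun h =>
    hω (exp_eq_one_iff.mpr ⟨-n, by push_cast; linear_combination -h⟩)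
  have hexp_neg : exp (-ω * β) = exp (-β * ω) := by ring_nf
  have hexp_pos : exp (ω * β) = (exp (-β * ω))⁻¹ := by
    rw [← exp_neg]
    ring_nf
  rw [fourierCoeffOn_add hβ (Continuous.intervalIntegrable (by fun_prop) _ _)
      (Continuous.intervalIntegrable (by fun_prop) _ _),
    fourierCoeffOn.const_mul, fourierCoeffOn_zero_left_exp_mul hβ hneg,
    fourierCoeffOn_zero_left_exp_mul hβ hpos, hexp_neg, hexp_pos]
  have hE := exp_ne_zero (-β * ω)
  generalize exp (-β * ω) = E at hE ⊢
  generalize (n : ℂ) * (2 * Real.pi * I) = ν at hneg hpos ⊢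
  have hadd : ω * β + ν ≠ 0 := fun h => hneg (by linear_combination -h)
  have hsub : ω * β - ν ≠ 0 := sub_ne_zero.mpr hpos
  rw [sq_sub_sq, show -ω * β - ν = -(ω * β + ν) by ring]
  field_simp
  ring

theorem fourierCoeffOn_thermalPropagator (hβ : 0 < β) (hω : exp (-β * ω) ≠ 1) (n : ℤ) :
    fourierCoeffOn hβ (thermalPropagator β ω) n =
      1 / (ω ^ 2 + (2 * Real.pi / β * n) ^ 2) := by
  have hβ0 : (β : ℂ) ≠ 0 := ofReal_ne_zero.mpr hβ.ne'
  have hω0 : ω ≠ 0 := by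
    rintro rfl
    simp at hω
  have hE : 1 - exp (-β * ω) ≠ 0 := sub_ne_zero.mpr hω.symm
  have hdenom : ω ^ 2 + (2 * Real.pi / β * n) ^ 2 =
      ((ω * β) ^ 2 - (n * (2 * Real.pi * I)) ^ 2) / β ^ 2 := by
    field_simp
    linear_combination (2 * Real.pi * n) ^ 2 * I_sq
  rw [funext thermalPropagator_eq_exp_add_exp, fourierCoeffOn.const_mul,
    fourierCoeffOn_exp_neg_add_exp hβ hω, hdenom, one_div_div]
  generalize 1 - exp (-β * ω) = E at hE ⊢
  field_simp

end ThermalPropagator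

theorem matsubara_sum_general {β u : ℝ} {ω : ℂ} (hβ : 0 < β) (hω : Complex.exp (-β * ω) ≠ 1)
    (hu : u ∈ Set.Icc 0 β) :
    HasSum (fun η : ℤ =>
        Complex.exp (Complex.I * (2 * Real.pi / β) * η * u) / (ω ^ 2 + (2 * Real.pi / β * η) ^ 2))
      (thermalPropagator β ω u) := by
  have hfreq : (2 * Real.pi / β : ℂ) ≠ 0 := by
    exact_mod_cast (div_pos Real.two_pi_pos hβ).ne'
  have coeff := fourierCoeffOn_thermalPropagator hβ hω
  have hsum : Summable (fourierCoeffOn hβ (thermalPropagator β ω)) := by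
    simpa only [funext coeff] using summable_one_div_sq_add_mul_int_sq ω hfreq
  have hseries := hasSum_fourierCoeffOn_smul_fourier hβ
    continuous_thermalPropagator.continuousOn thermalPropagator_zero_eq_thermalPropagator_period
    hsum hu
  refine hseries.congr_fun fun η => ?_
  rw [coeff, fourier_coe_apply, smul_eq_mul, div_eq_mul_one_div, mul_comm]
  push_cast
  ring_nf

/-- Matsubara-frequency expansion of the Matsubara propagator at a single
mode of energy `ω`: for `β > 0`, `ω > 0` and `u ∈ [0, β]`, the family
`η ↦ e^{i(2π/β)ηu} / (ω² + ((2π/β)η)²)` is unconditionally summable with sum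
`(β/(2ω)) (e^{-uω} + e^{-(β-u)ω}) / (1 - e^{-βω})`. -/
theorem matsubara_sum (β ω u : ℝ) (hβ : 0 < β) (hω : 0 < ω) (hu : u ∈ Set.Icc 0 β) :
    HasSum (fun η : ℤ =>
        Complex.exp (Complex.I * ((2 * Real.pi / β : ℝ) : ℂ) * (η : ℂ) * (u : ℂ)) /
          ((ω ^ 2 + (2 * Real.pi / β * (η : ℝ)) ^ 2 : ℝ) : ℂ))
      (((β / (2 * ω)) * (Real.exp (-u * ω) + Real.exp (-(β - u) * ω)) /
          (1 - Real.exp (-β * ω)) : ℝ) : ℂ) := by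
  have hexp : Complex.exp (-β * ω) ≠ 1 := by
    exact_mod_cast (Real.exp_lt_one_iff.mpr (mul_neg_of_neg_of_pos (neg_neg_of_pos hβ) hω)).ne
  simpa [thermalPropagator] using matsubara_sum_general hβ hexp hu
end

section
/- Let m > 0 and let h : ℝ³ → ℂ be Lebesgue integrable. Then ∫_{ℝ³} e^{i t w(p)} h(p) dp → 0 as t → +∞ (and likewise as t → -∞). -/
open MeasureTheory Filter

/-!
If a phase `φ` pulls Lebesgue-null sets back to null sets, then for every set `s` of finite measure
the law of `φ` on `s` has a density, so the classical Riemann–Lebesgue lemma makes its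
characteristic function vanish at infinity. This is the assertion for indicators, and it extends to
all integrable functions because `h ↦ ∫ e^{itφ} h` is a contraction from `L¹`, uniformly in `t`.

The phase `√(|p|² + m²)` has this property: in polar coordinates the norm pulls null sets back to
null sets, and so does every map of the line whose derivative is almost everywhere nonzero, since on
countably many pieces it is close to an invertible linear map.
-/

open Measure Topology

section CharFun

variable {V : Type*} [NormedAddCommGroup V] [InnerProductSpace ℝ V] [FiniteDimensional ℝ V]
  [MeasurableSpace V] [BorelSpace V]

lemma tendsto_charFun_cocompact_of_absolutelyContinuous {ν : Measure V} [IsFiniteMeasure ν]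
    (hν : ν ≪ volume) : Tendsto (charFun ν) (cocompact V) (𝓝 0) := by
  have hscale : -(2 * Real.pi)⁻¹ ≠ 0 := by simp [Real.pi_ne_zero]
  have hcocompact : Tendsto (fun t : V ↦ -(2 * Real.pi)⁻¹ • t) (cocompact V) (cocompact V) :=
    (Homeomorph.smulOfNeZero _ hscale).isClosedEmbedding.tendsto_cocompact
  have hfourier := (tendsto_integral_exp_inner_smul_cocompact
    fun x ↦ ((ν.rnDeriv volume x).toReal : ℂ)).comp hcocompact
  refine hfourier.congr fun t ↦ ?_
  rw [charFun_eq_fourierIntegral', VectorFourier.fourierIntegral, ← integral_rnDeriv_smul hν]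
  refine integral_congr_ae (ae_of_all _ fun x ↦ ?_)
  simp [Circle.smul_def, mul_comm]

end CharFun

section OscillatoryIntegral

open Complex

variable {X F : Type*} [MeasurableSpace X] {μ : Measure X} {φ : X → ℝ}
  [NormedAddCommGroup F] [NormedSpace ℂ F]

lemma norm_exp_I_mul_ofReal_mul_ofReal (t x : ℝ) : ‖exp (I * t * x)‖ = 1 := by
  rw [mul_assoc, ← ofReal_mul, norm_exp_I_mul_ofReal]

lemma integrable_exp_I_mul_smul (hφ : Measurable φ) (t : ℝ) {h : X → F} (hh : Integrable h μ) :
    Integrable (fun x ↦ exp (I * t * φ x) • h x) μ :=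
  hh.bdd_smul 1 (by fun_prop) (ae_of_all _ fun x ↦ (norm_exp_I_mul_ofReal_mul_ofReal t (φ x)).le)

lemma lipschitzWith_integral_exp_I_mul_smul (hφ : Measurable φ) (t : ℝ) :
    LipschitzWith 1 fun h : X →₁[μ] F ↦ ∫ x, exp (I * t * φ x) • h x ∂μ := by
  refine LipschitzWith.mk_one fun g h ↦ ?_
  calc dist (∫ x, exp (I * t * φ x) • g x ∂μ) (∫ x, exp (I * t * φ x) • h x ∂μ)
    _ = ‖∫ x, exp (I * t * φ x) • (g x - h x) ∂μ‖ := by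
      rw [dist_eq_norm, ← integral_sub (integrable_exp_I_mul_smul hφ t (L1.integrable_coeFn g))
        (integrable_exp_I_mul_smul hφ t (L1.integrable_coeFn h))]
      simp only [smul_sub]
    _ ≤ ∫ x, ‖exp (I * t * φ x) • (g x - h x)‖ ∂μ := norm_integral_le_integral_norm _
    _ = ∫ x, dist (g x) (h x) ∂μ := by
      simp only [norm_smul, norm_exp_I_mul_ofReal_mul_ofReal, one_mul, dist_eq_norm]
    _ = dist g h := (L1.dist_eq_integral_dist g h).symm

lemma tendsto_integral_exp_I_mul_smul_indicator_const_cocompact [CompleteSpace F]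
    (hφ : QuasiMeasurePreserving φ μ volume) {s : Set X} (hs : MeasurableSet s) (hμs : μ s < ⊤)
    (c : F) :
    Tendsto (fun t : ℝ ↦ ∫ x, exp (I * t * φ x) • s.indicator (fun _ ↦ c) x ∂μ)
      (cocompact ℝ) (𝓝 0) := by
  have : Fact (μ s < ⊤) := ⟨hμs⟩
  have hac : (μ.restrict s).map φ ≪ volume :=
    (hφ.mono_left restrict_le_self.absolutelyContinuous).absolutelyContinuous
  have hchar := (tendsto_charFun_cocompact_of_absolutelyContinuous hac).smul_const c
  rw [zero_smul] at hchar
  refine hchar.congr fun t ↦ ?_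
  calc charFun ((μ.restrict s).map φ) t • c
    _ = (∫ x in s, exp (I * t * φ x) ∂μ) • c := by
      rw [charFun_apply_real, integral_map hφ.measurable.aemeasurable (by fun_prop)]
      simp only [mul_comm, mul_left_comm]
    _ = ∫ x in s, exp (I * t * φ x) • c ∂μ := (integral_smul_const _ c).symm
    _ = ∫ x, exp (I * t * φ x) • s.indicator (fun _ ↦ c) x ∂μ := by
      rw [← integral_indicator hs]
      simp only [Set.indicator_smul_apply s (fun x ↦ exp (I * t * φ x)) (fun _ ↦ c)]

theorem tendsto_integral_exp_I_mul_smul_cocompact [CompleteSpace F]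
    (hφ : QuasiMeasurePreserving φ μ volume) {h : X → F} (hh : Integrable h μ) :
    Tendsto (fun t : ℝ ↦ ∫ x, exp (I * t * φ x) • h x ∂μ) (cocompact ℝ) (𝓝 0) := by
  refine Integrable.induction (P := fun h : X → F ↦
    Tendsto (fun t : ℝ ↦ ∫ x, exp (I * t * φ x) • h x ∂μ) (cocompact ℝ) (𝓝 0))
    ?indicator ?add ?closed ?congr hh
  case indicator =>
    exact fun c s hs hμs ↦
      tendsto_integral_exp_I_mul_smul_indicator_const_cocompact hφ hs hμs c
  case add =>
    intro g h _ hg hh ihg ihh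
    have hsum := ihg.add ihh
    rw [add_zero] at hsum
    refine hsum.congr fun t ↦ ?_
    simp only [Pi.add_apply, smul_add]
    rw [integral_add (integrable_exp_I_mul_smul hφ.measurable t hg)
      (integrable_exp_I_mul_smul hφ.measurable t hh)]
  case closed =>
    have hequi := LipschitzWith.uniformEquicontinuous _ 1 fun t : ℝ ↦
      lipschitzWith_integral_exp_I_mul_smul (μ := μ) (F := F) hφ.measurable t
    exact hequi.equicontinuous.isClosed_setOfPred_tendsto continuous_const
  case congr =>
    intro g h hgh _ ihg
    refine ihg.congr fun t ↦ integral_congr_ae ?_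
    filter_upwards [hgh] with x hx using by rw [hx]

end OscillatoryIntegral

section NullPreimage

open scoped NNReal

variable {E : Type*} [NormedAddCommGroup E] [NormedSpace ℝ E] [FiniteDimensional ℝ E]
  [MeasurableSpace E] [BorelSpace E] (μ : Measure E) [IsAddHaarMeasure μ]

lemma exists_approximatesLinearOn_imp_addHaar_eq_zero {A : E →L[ℝ] E} (hA : A.det ≠ 0) :
    ∃ δ : ℝ≥0, δ ≠ 0 ∧ ∀ (f : E → E) (s : Set E),
      ApproximatesLinearOn f A s δ → μ (f '' s) = 0 → μ s = 0 := by
  obtain ⟨c, hc, hcA⟩ := ENNReal.lt_iff_exists_nnreal_btwn.1 (ENNReal.ofReal_pos.2 (abs_pos.2 hA))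
  obtain ⟨δ, hδ, hδpos⟩ :=
    ((mul_le_addHaar_image_of_lt_det μ A hcA).and self_mem_nhdsWithin).exists
  refine ⟨δ, ne_of_gt hδpos, fun f s hfA hfs ↦ ?_⟩
  have hle : c * μ s ≤ 0 := hfs ▸ hδ s f hfA
  exact (mul_eq_zero.1 (nonpos_iff_eq_zero.1 hle)).resolve_left hc.ne'

lemma addHaar_eq_zero_of_addHaar_image_eq_zero_of_det_fderiv_ne_zero {f : E → E}
    {f' : E → E →L[ℝ] E} {s : Set E} (hf' : ∀ x ∈ s, HasFDerivWithinAt f (f' x) s x)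
    (hdet : ∀ x ∈ s, (f' x).det ≠ 0) (hfs : μ (f '' s) = 0) : μ s = 0 := by
  rcases s.eq_empty_or_nonempty with rfl | hs
  · exact measure_empty
  have hnear (A : E →L[ℝ] E) : ∃ δ : ℝ≥0, δ ≠ 0 ∧ (A.det ≠ 0 → ∀ (f : E → E) (t : Set E),
      ApproximatesLinearOn f A t δ → μ (f '' t) = 0 → μ t = 0) := by
    by_cases hA : A.det = 0
    · exact ⟨1, one_ne_zero, fun hA' ↦ absurd hA hA'⟩
    · obtain ⟨δ, hδ, hnull⟩ := exists_approximatesLinearOn_imp_addHaar_eq_zero μ hA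
      exact ⟨δ, hδ, fun _ ↦ hnull⟩
  choose δ hδ hnull using hnear
  obtain ⟨t, A, -, -, hcover, happrox, hA⟩ :=
    exists_partition_approximatesLinearOn_of_hasFDerivWithinAt f s f' hf' δ hδ
  have hpiece (n : ℕ) : μ (s ∩ t n) = 0 := by
    obtain ⟨y, hy, hAy⟩ := hA hs n
    exact hnull (A n) (hAy ▸ hdet y hy) f _ (happrox n)
      (measure_mono_null (Set.image_mono Set.inter_subset_left) hfs)
  rw [← Set.inter_eq_left.2 hcover, Set.inter_iUnion]
  exact measure_iUnion_null hpiece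

lemma quasiMeasurePreserving_of_ae_deriv_ne_zero {f : ℝ → ℝ} (hf : Measurable f)
    (hderiv : ∀ᵐ x, deriv f x ≠ 0) : QuasiMeasurePreserving f volume volume := by
  refine ⟨hf, AbsolutelyContinuous.mk fun s hs hs0 ↦ ?_⟩
  rw [map_apply hf hs, ← measure_inter_conull hderiv]
  refine addHaar_eq_zero_of_addHaar_image_eq_zero_of_det_fderiv_ne_zero volume
    (f := f) (f' := fderiv ℝ f) ?hasFDeriv ?det_ne_zero ?image_null
  case hasFDeriv =>
    exact fun x hx ↦ (differentiableAt_of_deriv_ne_zero hx.2).hasFDerivAt.hasFDerivWithinAt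
  case det_ne_zero =>
    intro x hx
    rw [← toSpanSingleton_deriv, ContinuousLinearMap.det_toSpanSingleton]
    exact hx.2
  case image_null =>
    exact measure_mono_null
      ((Set.image_mono Set.inter_subset_left).trans (Set.image_preimage_subset f s)) hs0

lemma quasiMeasurePreserving_norm [Nontrivial E] :
    QuasiMeasurePreserving (norm : E → ℝ) μ volume := by
  have hval : QuasiMeasurePreserving (Subtype.val : Set.Ioi (0 : ℝ) → ℝ)
      (volumeIoiPow (Module.finrank ℝ E - 1)) volume :=
    (measurePreserving_subtype_coe measurableSet_Ioi).quasiMeasurePreserving.mono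
      (withDensity_absolutelyContinuous _ _) restrict_le_self.absolutelyContinuous
  have hpolar : QuasiMeasurePreserving (fun p : ({0}ᶜ : Set E) ↦ ‖(p : E)‖)
      (μ.comap Subtype.val) volume := by
    simpa [Function.comp_def] using hval.comp (quasiMeasurePreserving_snd.comp
      μ.measurePreserving_homeomorphUnitSphereProd.quasiMeasurePreserving)
  have hmap : (μ.comap Subtype.val).map (Subtype.val : ({0}ᶜ : Set E) → E) = μ :=
    (map_comap_subtype_coe (measurableSet_singleton 0).compl μ).trans
      (restrict_eq_self_of_ae_mem (ae_ne μ 0))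
  refine ⟨measurable_norm, ?_⟩
  rw [← hmap, map_map measurable_norm measurable_subtype_coe]
  exact hpolar.absolutelyContinuous

end NullPreimage

lemma quasiMeasurePreserving_sqrt_sq_add_sq (m : ℝ) :
    QuasiMeasurePreserving (fun r : ℝ ↦ √(r ^ 2 + m ^ 2)) volume volume := by
  refine quasiMeasurePreserving_of_ae_deriv_ne_zero (by fun_prop) ?_
  filter_upwards [ae_ne volume (0 : ℝ)] with r hr
  have hpos : 0 < r ^ 2 + m ^ 2 := by positivity
  have hderiv : HasDerivAt (fun r : ℝ ↦ √(r ^ 2 + m ^ 2)) (2 * r / (2 * √(r ^ 2 + m ^ 2))) r := by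
    simpa using ((hasDerivAt_pow 2 r).add_const (m ^ 2)).sqrt hpos.ne'
  rw [hderiv.deriv]
  positivity

theorem riemann_lebesgue_massive_shell_general {E F : Type*}
    [NormedAddCommGroup E] [NormedSpace ℝ E] [FiniteDimensional ℝ E] [Nontrivial E]
    [MeasurableSpace E] [BorelSpace E] (μ : Measure E) [IsAddHaarMeasure μ]
    [NormedAddCommGroup F] [NormedSpace ℂ F] [CompleteSpace F]
    (m : ℝ) {h : E → F} (hh : Integrable h μ) :
    Tendsto (fun t : ℝ ↦
        ∫ p, Complex.exp (Complex.I * (t : ℂ) * (√(‖p‖ ^ 2 + m ^ 2) : ℂ)) • h p ∂μ)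
      (cocompact ℝ) (𝓝 0) :=
  tendsto_integral_exp_I_mul_smul_cocompact
    ((quasiMeasurePreserving_sqrt_sq_add_sq m).comp (quasiMeasurePreserving_norm μ)) hh

/-- Riemann–Lebesgue-type statement: for `m > 0` and `h` integrable on `ℝ³`,
`∫ e^{i t w(p)} h(p) dp → 0` as `t → +∞` and as `t → -∞`, where `w(p) = √(|p|² + m²)`. -/
theorem riemann_lebesgue_massive_shell (m : ℝ) (hm : 0 < m)
    (h : EuclideanSpace ℝ (Fin 3) → ℂ) (hh : Integrable h) :
    Tendsto (fun t : ℝ => ∫ p : EuclideanSpace ℝ (Fin 3),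
        Complex.exp (Complex.I * (t : ℂ) * (Real.sqrt (‖p‖ ^ 2 + m ^ 2) : ℂ)) * h p)
      atTop (nhds 0) ∧
    Tendsto (fun t : ℝ => ∫ p : EuclideanSpace ℝ (Fin 3),
        Complex.exp (Complex.I * (t : ℂ) * (Real.sqrt (‖p‖ ^ 2 + m ^ 2) : ℂ)) * h p)
      atBot (nhds 0) := by
  have hlim := riemann_lebesgue_massive_shell_general volume m hh
  exact ⟨hlim.mono_left atTop_le_cocompact, hlim.mono_left atBot_le_cocompact⟩
end

section
/- Let β > 0 and m > 0. Then the function p ↦ ( b₊(w(p))² / (4 w(p)²) ) · β e^{-β w(p)} is integrable on ℝ³ and its integral I = ∫_{ℝ³} ( b₊(w(p))² / (4 w(p)²) ) β e^{-β w(p)} dp satisfies 0 < I < ∞. In particular the large-time limit of the correction B̂^{[1]} evaluated at coinciding points is nonzero. -/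
open MeasureTheory

/-!
The Bose factor is decreasing and the energy is bounded below by the mass, so the integrand is at
most a constant times `exp (-β w(p)) ≤ exp (-β ‖p‖)`. The exponential decays faster than any power
of `‖p‖`, hence is integrable for every measure of temperate growth. Positivity of the integral
comes from pointwise positivity of the integrand.
-/

section Bose

/-- The Bose factor `b₊(x) = (1 - e^{-βx})⁻¹` at inverse temperature `β`. It is meaningful for
`β * x ≠ 0`; at `β * x = 0` it takes the junk value `0`. -/
noncomputable def boseFactor (β x : ℝ) : ℝ := (1 - Real.exp (-β * x))⁻¹

/-- The thermal weight `b₊(x)² / (4x²) · β e^{-βx}` of a mode of energy `x`, whose integral over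
momenta is the coinciding-point value of the first-order correction up to a factor. It equals
`-(db₊/dx) / (4x²)`. -/
noncomputable def thermalWeight (β x : ℝ) : ℝ :=
  boseFactor β x ^ 2 / (4 * x ^ 2) * (β * Real.exp (-β * x))

variable {β x c : ℝ}

theorem one_sub_exp_neg_mul_pos (h : 0 < β * x) : 0 < 1 - Real.exp (-β * x) :=
  sub_pos.2 (Real.exp_lt_one_iff.2 (by linarith))

theorem boseFactor_pos (h : 0 < β * x) : 0 < boseFactor β x :=
  inv_pos.2 (one_sub_exp_neg_mul_pos h)

theorem boseFactor_antitoneOn (hβ : 0 < β) : AntitoneOn (boseFactor β) (Set.Ioi 0) := by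
  intro x hx y _ hxy
  have hexp : Real.exp (-β * y) ≤ Real.exp (-β * x) :=
    Real.exp_le_exp.2 (mul_le_mul_of_nonpos_left hxy (neg_nonpos.2 hβ.le))
  exact inv_anti₀ (one_sub_exp_neg_mul_pos (mul_pos hβ hx)) (sub_le_sub_left hexp 1)

theorem measurable_thermalWeight (β : ℝ) : Measurable (thermalWeight β) := by
  unfold thermalWeight boseFactor
  fun_prop

theorem thermalWeight_pos (hβ : 0 < β) (hx : 0 < x) : 0 < thermalWeight β x := by
  have hb := boseFactor_pos (mul_pos hβ hx)
  unfold thermalWeight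
  positivity

theorem thermalWeight_le_mul_exp (hβ : 0 < β) (hc : 0 < c) (hcx : c ≤ x) :
    thermalWeight β x ≤ boseFactor β c ^ 2 / (4 * c ^ 2) * (β * Real.exp (-β * x)) := by
  have hx : 0 < x := hc.trans_le hcx
  have hb : 0 ≤ boseFactor β x := (boseFactor_pos (mul_pos hβ hx)).le
  have hbc : boseFactor β x ≤ boseFactor β c := boseFactor_antitoneOn hβ hc hx hcx
  unfold thermalWeight
  gcongr

theorem pow_mul_exp_neg_mul_le (hβ : 0 < β) (hx : 0 ≤ x) (n : ℕ) :
    x ^ n * Real.exp (-β * x) ≤ n.factorial / β ^ n := by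
  have hexp : (β * x) ^ n / n.factorial ≤ Real.exp (β * x) :=
    Real.pow_div_factorial_le_exp _ (by positivity) n
  rw [div_le_iff₀ (by positivity), mul_pow] at hexp
  rw [neg_mul, Real.exp_neg, ← div_eq_mul_inv, div_le_div_iff₀ (by positivity) (by positivity)]
  linarith

end Bose

section Integral

variable {α : Type*} [MeasurableSpace α] {μ : Measure α}

theorem integral_pos_of_forall_pos [NeZero μ] {f : α → ℝ} (hf : Integrable f μ)
    (hpos : ∀ x, 0 < f x) : 0 < ∫ x, f x ∂μ := by
  have hsupp : Function.support f = Set.univ := Set.eq_univ_of_forall fun x => (hpos x).ne'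
  rw [integral_pos_iff_support_of_nonneg (fun x => (hpos x).le) hf, hsupp]
  exact NeZero.pos _

theorem integrable_thermalWeight_comp {β c : ℝ} {w : α → ℝ} (hβ : 0 < β) (hc : 0 < c)
    (hcw : ∀ a, c ≤ w a) (hw : Measurable w)
    (hexp : Integrable (fun a => Real.exp (-β * w a)) μ) :
    Integrable (fun a => thermalWeight β (w a)) μ := by
  refine ((hexp.const_mul β).const_mul (boseFactor β c ^ 2 / (4 * c ^ 2))).mono'
    ((measurable_thermalWeight β).comp hw).aestronglyMeasurable (.of_forall fun a => ?_)
  rw [Real.norm_of_nonneg (thermalWeight_pos hβ (hc.trans_le (hcw a))).le]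
  exact thermalWeight_le_mul_exp hβ hc (hcw a)

end Integral

section Energy

variable {E : Type*} [NormedAddCommGroup E]

/-- The relativistic energy `w(p) = √(‖p‖² + m²)` of a particle of mass `m` and momentum `p`. -/
noncomputable def relativisticEnergy (m : ℝ) (p : E) : ℝ := Real.sqrt (‖p‖ ^ 2 + m ^ 2)

theorem abs_mass_le_relativisticEnergy (m : ℝ) (p : E) : |m| ≤ relativisticEnergy m p :=
  Real.abs_le_sqrt (le_add_of_nonneg_left (sq_nonneg _))

theorem norm_le_relativisticEnergy (m : ℝ) (p : E) : ‖p‖ ≤ relativisticEnergy m p :=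
  Real.le_sqrt_of_sq_le (le_add_of_nonneg_right (sq_nonneg _))

variable [MeasurableSpace E] [OpensMeasurableSpace E]

theorem measurable_relativisticEnergy (m : ℝ) :
    Measurable (relativisticEnergy m : E → ℝ) := by
  unfold relativisticEnergy
  fun_prop

variable (μ : Measure E) [μ.HasTemperateGrowth] {β m : ℝ}

theorem integrable_exp_neg_mul_norm (hβ : 0 < β) :
    Integrable (fun p : E => Real.exp (-β * ‖p‖)) μ := by
  set n := μ.integrablePower
  have hle_one (p : E) : Real.exp (-β * ‖p‖) ≤ 1 :=
    Real.exp_le_one_iff.2 (mul_nonpos_of_nonpos_of_nonneg (neg_nonpos.2 hβ.le) (norm_nonneg p))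
  have hdecay (p : E) : ‖p‖ ^ (0 + n) * Real.exp (-β * ‖p‖) ≤ n.factorial / β ^ n := by
    simpa only [zero_add] using pow_mul_exp_neg_mul_le hβ (norm_nonneg p) n
  refine ((Measure.integrable_pow_neg_integrablePower μ).const_mul
    (2 ^ n * (1 + n.factorial / β ^ n))).mono'
    (Measurable.aestronglyMeasurable (by fun_prop)) (.of_forall fun p => ?_)
  simpa only [pow_zero, one_mul, Real.norm_of_nonneg (Real.exp_nonneg _)] using
    pow_mul_le_of_le_of_pow_mul_le (norm_nonneg p) (Real.exp_nonneg _) (hle_one p) (hdecay p)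

theorem integrable_exp_neg_mul_relativisticEnergy (hβ : 0 < β) (m : ℝ) :
    Integrable (fun p : E => Real.exp (-β * relativisticEnergy m p)) μ := by
  refine (integrable_exp_neg_mul_norm μ hβ).mono'
    ((measurable_relativisticEnergy m).const_mul (-β)).exp.aestronglyMeasurable
    (.of_forall fun p => ?_)
  rw [Real.norm_of_nonneg (Real.exp_nonneg _), Real.exp_le_exp]
  exact mul_le_mul_of_nonpos_left (norm_le_relativisticEnergy m p) (neg_nonpos.2 hβ.le)

theorem Bhat_coinciding_points_positive_general [NeZero μ] (hβ : 0 < β) (hm : m ≠ 0) :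
    Integrable (fun p : E => thermalWeight β (relativisticEnergy m p)) μ ∧
      0 < ∫ p : E, thermalWeight β (relativisticEnergy m p) ∂μ := by
  have hint : Integrable (fun p : E => thermalWeight β (relativisticEnergy m p)) μ :=
    integrable_thermalWeight_comp hβ (abs_pos.2 hm) (abs_mass_le_relativisticEnergy m)
      (measurable_relativisticEnergy m) (integrable_exp_neg_mul_relativisticEnergy μ hβ m)
  have henergy (p : E) : 0 < relativisticEnergy m p :=
    (abs_pos.2 hm).trans_le (abs_mass_le_relativisticEnergy m p)
  exact ⟨hint, integral_pos_of_forall_pos hint fun p => thermalWeight_pos hβ (henergy p)⟩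

end Energy

/-- the function `p ↦ (b₊(w(p))²/(4w(p)²)) β e^{-βw(p)}` is integrable on
`ℝ³` with strictly positive (finite) integral; in particular the large-time limit of the
correction `B̂^{[1]}` at coinciding points is nonzero. -/
theorem Bhat_coinciding_points_positive (β m : ℝ) (hβ : 0 < β) (hm : 0 < m) :
    Integrable (fun p : EuclideanSpace ℝ (Fin 3) =>
        (1 - Real.exp (-β * Real.sqrt (‖p‖ ^ 2 + m ^ 2)))⁻¹ ^ 2 /
            (4 * Real.sqrt (‖p‖ ^ 2 + m ^ 2) ^ 2) *
          (β * Real.exp (-β * Real.sqrt (‖p‖ ^ 2 + m ^ 2)))) ∧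
      0 < ∫ p : EuclideanSpace ℝ (Fin 3),
        (1 - Real.exp (-β * Real.sqrt (‖p‖ ^ 2 + m ^ 2)))⁻¹ ^ 2 /
            (4 * Real.sqrt (‖p‖ ^ 2 + m ^ 2) ^ 2) *
          (β * Real.exp (-β * Real.sqrt (‖p‖ ^ 2 + m ^ 2))) :=
  Bhat_coinciding_points_positive_general volume hβ hm.ne'
end
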